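/- arXiv:1801.00521 — 4 statements merged into one kernel-verified Lean document; each statement's English description precedes it below -/
import Mathlib

section
/- Fix a > 0 and an integer n ≥ 1, and let σ_m(a) := a · d/da log D_m(a) for m = n−1, n, n+1 (with D_0 := 1, so σ_0 := 0). Then the following second order difference equation holds at the point a: [ (σ_{n−1} − σ_n)(σ_n − σ_{n+1} − 2a²)( (σ_{n−1} − σ_n − 2a²)(σ_n − σ_{n+1}) + 4n a² ) − 8a⁴( σ_n + n(σ_n − σ_{n+1}) ) ]² = (σ_{n−1} − σ_n)(σ_n − σ_{n+1})(σ_{n−1} − σ_n − 2a²)²(σ_n − σ_{n+1} − 2a²)²( (σ_{n−1} − σ_n)(σ_n − σ_{n+1}) + 8n a² ). -/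
/-! Let `P_n` be the monic orthogonal polynomials of `L_a(p) = ∫_{|x| ≥ a} p(x) e^{-x²} dx` and
`h_n = L_a(P_n²)`. For every `t`, `D_n(t)` is the Gram determinant of `L_t` in the basis
`P_0, …, P_{n-1}` taken at the fixed parameter `a`; that Gram matrix is diagonal at `t = a`, so
Jacobi's formula gives `σ_n = -∑_{j<n} R_j` with `R_j = 2a e^{-a²} P_j(a)² / h_j`.

Put `r_n = 2 e^{-a²} P_n(a) P_{n-1}(a) / h_{n-1}` and let `β_n = h_n / h_{n-1}` be the recurrence
coefficients. Integrating `(P_n P_{n-1} e^{-x²})'` gives `2 β_n = n + r_n`, hence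
`(n + r_n) R_{n-1} R_n = 2a² r_n²`. The three-term recurrence at `a` gives `R_n = r_n + r_{n+1}` and
`(n + 1 + r_{n+1}) R_{n+1} - (n + r_n) R_{n-1} = 2a² (r_{n+1} - r_n)`, and from these, by induction,
`σ_n = r_n² + 2a² r_n - (n + r_n)(R_{n-1} + R_n)`. With `A = R_{n-1} = σ_{n-1} - σ_n` and
`B = R_n = σ_n - σ_{n+1}`, these relations turn the bracket on the left of the difference equation
into `(A - 2a²)(B - 2a²)(AB - 4a² r_n)`, where `(AB - 4a² r_n)² = AB (AB + 8n a²)`; squaring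
therefore eliminates `r_n`. -/

open MeasureTheory

/-- The `m`-th moment of the Gaussian weight `e^{-x^2}` on `ℝ` with the
interval `(-a, a)` excised. -/
noncomputable def gaussMoment (a : ℝ) (m : ℕ) : ℝ :=
  ∫ x in {x : ℝ | a ≤ |x|}, x ^ m * Real.exp (-x ^ 2)

/-- The `n × n` Hankel determinant generated by the gapped Gaussian weight. -/
noncomputable def gaussHankel (n : ℕ) (a : ℝ) : ℝ :=
  Matrix.det (Matrix.of fun i j : Fin n => gaussMoment a ((i : ℕ) + (j : ℕ)))

open Polynomial

/-! ### Hankel determinants -/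

section HankelDet

variable {R : Type*} [CommRing R]

lemma linearMap_C_mul (L : R[X] →ₗ[R] R) (c : R) (p : R[X]) : L (C c * p) = c * L p := by
  rw [← smul_eq_C_mul, map_smul, smul_eq_mul]

/-- The `n × n` Hankel determinant of the moments `L (X ^ k)` of a linear functional `L`. -/
noncomputable def hankelDet (L : R[X] →ₗ[R] R) (n : ℕ) : R :=
  Matrix.det (Matrix.of fun i j : Fin n => L (X ^ ((i : ℕ) + (j : ℕ))))

lemma gram_eq_transpose_mul_hankel_mul (L : R[X] →ₗ[R] R) {n : ℕ} {p : Fin n → R[X]}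
    (hp : ∀ i, (p i).natDegree < n) :
    Matrix.of (fun i j => L (p i * p j)) =
      (Matrix.of fun k i : Fin n => (p i).coeff k).transpose *
        Matrix.of (fun k l : Fin n => L (X ^ ((k : ℕ) + (l : ℕ)))) *
        Matrix.of fun l j : Fin n => (p j).coeff l := by
  have expand (i : Fin n) : p i = ∑ k : Fin n, C ((p i).coeff k) * X ^ (k : ℕ) := by
    rw [Fin.sum_univ_eq_sum_range (fun k => C ((p i).coeff k) * X ^ k) n]
    exact as_sum_range_C_mul_X_pow' _ (hp i)
  have term (b c : R) (k l : ℕ) :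
      L (C b * X ^ k * (C c * X ^ l)) = b * L (X ^ (k + l)) * c := by
    rw [show C b * X ^ k * (C c * X ^ l) = C b * (C c * X ^ (k + l)) by ring, linearMap_C_mul,
      linearMap_C_mul]
    ring
  ext i j
  rw [Matrix.of_apply, expand i, expand j, Finset.sum_mul_sum]
  simp only [map_sum, term, Matrix.mul_apply, Matrix.transpose_apply, Matrix.of_apply,
    Finset.sum_mul]
  exact Finset.sum_comm

lemma hankelDet_eq_det_gram (L : R[X] →ₗ[R] R) {n : ℕ} {p : Fin n → R[X]}
    (hdeg : ∀ i, (p i).natDegree = i) (hmonic : ∀ i, (p i).Monic) :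
    hankelDet L n = Matrix.det (Matrix.of fun i j => L (p i * p j)) := by
  rw [gram_eq_transpose_mul_hankel_mul L fun i => (hdeg i).trans_lt i.isLt, Matrix.det_mul,
    Matrix.det_mul, Matrix.det_transpose, Matrix.det_matrixOfPolynomials p hdeg hmonic, one_mul,
    mul_one, hankelDet]

end HankelDet

/-! ### Jacobi's formula -/

section Jacobi

variable {𝕜 : Type*} [NontriviallyNormedField 𝕜] {ι : Type*} [Fintype ι] [DecidableEq ι]

lemma hasDerivAt_det {A : 𝕜 → Matrix ι ι 𝕜} {A' : Matrix ι ι 𝕜} {a : 𝕜}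
    (hA : ∀ i j, HasDerivAt (fun t => A t i j) (A' i j) a) :
    HasDerivAt (fun t => (A t).det) ((A a).adjugate * A').trace a := by
  let det : ContinuousMultilinearMap 𝕜 (fun _ : ι => ι → 𝕜) 𝕜 :=
    ⟨Matrix.detRowAlternating.toMultilinearMap, continuous_id.matrix_det⟩
  have hA_pi : HasDerivAt (F := ι → ι → 𝕜) A A' a :=
    hasDerivAt_pi.2 fun i => hasDerivAt_pi.2 fun j => hA i j
  have hdet : HasDerivAt (fun t => (A t).det) (det.linearDeriv (A a) A') a :=
    (det.hasFDerivAt (A a)).comp_hasDerivAt a hA_pi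
  refine hdet.congr_deriv ((det.linearDeriv_apply _ _).trans ?_)
  rw [Matrix.trace_mul_comm]
  refine Finset.sum_congr rfl fun i _ => ?_
  calc ((A a).updateRow i (A' i)).det
      = ((A a).transpose.adjugate.mulVec (A' i)) i := by
        rw [← Matrix.cramer_transpose_apply, Matrix.cramer_eq_adjugate_mulVec]
    _ = (A' * (A a).adjugate) i i := by
        rw [← Matrix.adjugate_transpose, Matrix.mulVec_transpose]
        rfl

lemma hasDerivAt_det_of_eq_diagonal {A : 𝕜 → Matrix ι ι 𝕜} {A' : Matrix ι ι 𝕜} {a : 𝕜}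
    {d : ι → 𝕜} (hA : ∀ i j, HasDerivAt (fun t => A t i j) (A' i j) a)
    (hd : A a = Matrix.diagonal d) (hd₀ : ∀ i, d i ≠ 0) :
    HasDerivAt (fun t => (A t).det) ((A a).det * ∑ i, A' i i / d i) a := by
  refine (hasDerivAt_det hA).congr_deriv ?_
  rw [hd, Matrix.adjugate_diagonal, Matrix.det_diagonal, Finset.mul_sum]
  refine Finset.sum_congr rfl fun i _ => ?_
  rw [Matrix.diag_apply, Matrix.diagonal_mul,
    ← Finset.mul_prod_erase Finset.univ d (Finset.mem_univ i)]
  field_simp [hd₀ i]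

end Jacobi

/-! ### Orthogonal polynomials of an even functional -/

section OrthPoly

variable {K : Type*} [Field K]

/-- The monic orthogonal polynomials `P_n` of an even linear functional `L`, given by the
three-term recurrence `P_{n+2} = X P_{n+1} - β_{n+1} P_n` with `β_{n+1} = L(P_{n+1}²) / L(P_n²)`.
There is no diagonal recurrence coefficient because `L` is meant to be even. -/
noncomputable def orthPoly (L : K[X] →ₗ[K] K) : ℕ → K[X]
  | 0 => 1
  | 1 => X
  | n + 2 => X * orthPoly L (n + 1) -
      C (L (orthPoly L (n + 1) * orthPoly L (n + 1)) / L (orthPoly L n * orthPoly L n)) *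
        orthPoly L n

/-- The squared norm `h_n = L(P_n²)` of the `n`-th orthogonal polynomial. -/
noncomputable def orthNorm (L : K[X] →ₗ[K] K) (n : ℕ) : K := L (orthPoly L n * orthPoly L n)

/-- The recurrence coefficient `β_n = h_n / h_{n-1}`, with `β_0 = 0`. Thanks to the last convention
the recurrence holds from `n = 0` on, although `P_{n-1}` then means `P_0` by truncation. -/
noncomputable def recCoeff (L : K[X] →ₗ[K] K) : ℕ → K
  | 0 => 0
  | n + 1 => orthNorm L (n + 1) / orthNorm L n

/-- A linear functional on polynomials is even if it vanishes on odd polynomials. -/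
def IsEvenFunctional (L : K[X] →ₗ[K] K) : Prop := ∀ p : K[X], p.comp (-X) = -p → L p = 0

/-- Quasi-definiteness, usually stated as the nonvanishing of all Hankel determinants. For an even
functional these are the products of the `h_n`, so we require every `h_n` to be nonzero. -/
def IsQuasiDefinite (L : K[X] →ₗ[K] K) : Prop := ∀ n, orthNorm L n ≠ 0

lemma orthPoly_succ (L : K[X] →ₗ[K] K) (n : ℕ) :
    orthPoly L (n + 1) = X * orthPoly L n - C (recCoeff L n) * orthPoly L (n - 1) :=
  match n with
  | 0 => by simp [orthPoly, recCoeff]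
  | _ + 1 => rfl

lemma degree_recCoeff_mul_lt {L : K[X] →ₗ[K] K} {n : ℕ} (hn : (orthPoly L n).degree = n)
    (hsucc : (orthPoly L (n + 1)).degree = (n + 1 : ℕ)) :
    (C (recCoeff L (n + 1)) * orthPoly L n).degree < (X * orthPoly L (n + 1)).degree := by
  rw [X_mul, degree_mul_X, hsucc, ← smul_eq_C_mul]
  refine (degree_smul_le _ _).trans_lt ?_
  rw [hn]
  norm_cast
  omega

lemma degree_orthPoly (L : K[X] →ₗ[K] K) (n : ℕ) : (orthPoly L n).degree = n := by
  induction n using Nat.twoStepInduction with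
  | zero => simp [orthPoly]
  | one => simp [orthPoly]
  | more n ih₀ ih₁ =>
    rw [orthPoly_succ, Nat.add_sub_cancel,
      degree_sub_eq_left_of_degree_lt (degree_recCoeff_mul_lt ih₀ ih₁), X_mul, degree_mul_X, ih₁]
    norm_cast

lemma natDegree_orthPoly (L : K[X] →ₗ[K] K) (n : ℕ) : (orthPoly L n).natDegree = n :=
  natDegree_eq_of_degree_eq_some (degree_orthPoly L n)

lemma monic_orthPoly (L : K[X] →ₗ[K] K) (n : ℕ) : (orthPoly L n).Monic := by
  induction n using Nat.twoStepInduction with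
  | zero => exact monic_one
  | one => exact monic_X
  | more n _ ih₁ =>
    rw [orthPoly_succ, Nat.add_sub_cancel]
    exact (monic_X.mul ih₁).sub_of_left
      (degree_recCoeff_mul_lt (degree_orthPoly L n) (degree_orthPoly L (n + 1)))

lemma coeff_orthPoly_self (L : K[X] →ₗ[K] K) (n : ℕ) : (orthPoly L n).coeff n = 1 := by
  simpa only [natDegree_orthPoly] using (monic_orthPoly L n).coeff_natDegree

lemma orthPoly_comp_neg_X (L : K[X] →ₗ[K] K) (n : ℕ) :
    (orthPoly L n).comp (-X) = (-1) ^ n * orthPoly L n := by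
  induction n using Nat.twoStepInduction with
  | zero => simp [orthPoly]
  | one => simp [orthPoly]
  | more n ih₀ ih₁ =>
    rw [orthPoly_succ, Nat.add_sub_cancel, sub_comp, mul_comp, mul_comp, ih₀, ih₁, X_comp, C_comp]
    ring

lemma eval_neg_orthPoly (L : K[X] →ₗ[K] K) (n : ℕ) (x : K) :
    (orthPoly L n).eval (-x) = (-1) ^ n * (orthPoly L n).eval x := by
  simpa [eval_comp] using congrArg (eval x) (orthPoly_comp_neg_X L n)

lemma map_orthPoly_succ_mul_orthPoly_self {L : K[X] →ₗ[K] K} (heven : IsEvenFunctional L) (n : ℕ) :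
    L (orthPoly L (n + 1) * orthPoly L n) = 0 := by
  refine heven _ ?_
  have hsign : ((-1 : K[X]) ^ n) * (-1) ^ n = 1 := by rw [← mul_pow]; simp
  rw [mul_comp, orthPoly_comp_neg_X, orthPoly_comp_neg_X]
  linear_combination (-(orthPoly L (n + 1) * orthPoly L n)) * hsign

-- Multiplication by `X` is symmetric for `(p, q) ↦ L (p * q)`: apply the recurrence on both sides.
lemma map_orthPoly_succ_mul_orthPoly (L : K[X] →ₗ[K] K) (n m : ℕ) :
    L (orthPoly L (n + 1) * orthPoly L m) = L (orthPoly L n * orthPoly L (m + 1)) +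
      recCoeff L m * L (orthPoly L n * orthPoly L (m - 1)) -
      recCoeff L n * L (orthPoly L (n - 1) * orthPoly L m) := by
  rw [← linearMap_C_mul, ← linearMap_C_mul, ← map_add, ← map_sub, orthPoly_succ L n,
    orthPoly_succ L m]
  congr 1
  ring

lemma recCoeff_succ_mul_orthNorm {L : K[X] →ₗ[K] K} (hL : IsQuasiDefinite L) (n : ℕ) :
    recCoeff L (n + 1) * orthNorm L n = orthNorm L (n + 1) :=
  div_mul_cancel₀ _ (hL n)

lemma map_orthPoly_mul_orthPoly_of_lt {L : K[X] →ₗ[K] K} (hL : IsQuasiDefinite L)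
    (heven : IsEvenFunctional L) {m n : ℕ} (hmn : m < n) :
    L (orthPoly L n * orthPoly L m) = 0 := by
  induction n using Nat.twoStepInduction generalizing m with
  | zero => omega
  | one =>
    obtain rfl : m = 0 := by omega
    exact map_orthPoly_succ_mul_orthPoly_self heven 0
  | more n ih₀ ih₁ =>
    rcases (by omega : m = n + 1 ∨ m = n ∨ m < n) with rfl | rfl | hlt
    · exact map_orthPoly_succ_mul_orthPoly_self heven _
    -- `β_{m+1}` is chosen to make this product vanish
    · have hprev : recCoeff L m * L (orthPoly L (m + 1) * orthPoly L (m - 1)) = 0 := by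
        rw [ih₁ (by omega), mul_zero]
      rw [map_orthPoly_succ_mul_orthPoly, hprev, Nat.add_sub_cancel, add_zero, sub_eq_zero]
      exact (recCoeff_succ_mul_orthNorm hL m).symm
    · rw [map_orthPoly_succ_mul_orthPoly, ih₁ (by omega), ih₁ (by omega), Nat.add_sub_cancel,
        ih₀ hlt]
      simp only [mul_zero, add_zero, sub_zero]

lemma map_orthPoly_mul_of_degree_lt {L : K[X] →ₗ[K] K} (hL : IsQuasiDefinite L)
    (heven : IsEvenFunctional L) {n : ℕ} {q : K[X]} (hq : q.degree < n) :
    L (orthPoly L n * q) = 0 := by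
  let S : Sequence K := ⟨orthPoly L, degree_orthPoly L⟩
  have hspan : degreeLT K n ≤ (L ∘ₗ LinearMap.mulLeft K (orthPoly L n)).ker := by
    rw [← S.span_degreeLT fun i _ => (monic_orthPoly L i).leadingCoeff ▸ isUnit_one,
      Submodule.span_le]
    rintro _ ⟨m, hm, rfl⟩
    exact map_orthPoly_mul_orthPoly_of_lt hL heven hm
  exact hspan (mem_degreeLT.2 hq)

lemma map_orthPoly_mul {L : K[X] →ₗ[K] K} (hL : IsQuasiDefinite L) (heven : IsEvenFunctional L)
    {n : ℕ} {q : K[X]} (hq : q.natDegree ≤ n) :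
    L (orthPoly L n * q) = q.coeff n * orthNorm L n := by
  have hlt : (q - C (q.coeff n) * orthPoly L n).degree < n := by
    rw [degree_lt_iff_coeff_zero]
    intro m hm
    rw [coeff_sub, coeff_C_mul]
    rcases hm.eq_or_lt with rfl | hlt
    · rw [coeff_orthPoly_self, mul_one, sub_self]
    · rw [coeff_eq_zero_of_natDegree_lt (hq.trans_lt hlt),
        coeff_eq_zero_of_natDegree_lt ((natDegree_orthPoly L n).trans_lt hlt), mul_zero, sub_zero]
  have hzero := map_orthPoly_mul_of_degree_lt hL heven hlt
  rwa [mul_sub, mul_left_comm, map_sub, linearMap_C_mul, sub_eq_zero] at hzero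

lemma gram_orthPoly_eq_diagonal {L : K[X] →ₗ[K] K} (hL : IsQuasiDefinite L)
    (heven : IsEvenFunctional L) (n : ℕ) :
    Matrix.of (fun i j : Fin n => L (orthPoly L i * orthPoly L j)) =
      Matrix.diagonal fun i : Fin n => orthNorm L i := by
  ext i j
  rcases lt_trichotomy i j with h | rfl | h
  · rw [Matrix.diagonal_apply_ne _ h.ne, Matrix.of_apply, mul_comm]
    exact map_orthPoly_mul_orthPoly_of_lt hL heven h
  · rw [Matrix.diagonal_apply_eq]
    rfl
  · rw [Matrix.diagonal_apply_ne _ h.ne']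
    exact map_orthPoly_mul_orthPoly_of_lt hL heven h

lemma hankelDet_eq_prod_orthNorm {L : K[X] →ₗ[K] K} (hL : IsQuasiDefinite L)
    (heven : IsEvenFunctional L) (n : ℕ) : hankelDet L n = ∏ i : Fin n, orthNorm L i := by
  rw [hankelDet_eq_det_gram L (fun i : Fin n => natDegree_orthPoly L i)
    (fun i => monic_orthPoly L i), gram_orthPoly_eq_diagonal hL heven, Matrix.det_diagonal]

-- The orthogonal polynomials are frozen at the parameter `a`, where they make the Gram matrix
-- diagonal; their own dependence on the parameter never enters.
lemma hasDerivAt_hankelDet {𝕜 : Type*} [NontriviallyNormedField 𝕜] {L : 𝕜 → 𝕜[X] →ₗ[𝕜] 𝕜}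
    {L' : 𝕜[X] → 𝕜} {a : 𝕜} (hL : IsQuasiDefinite (L a)) (heven : IsEvenFunctional (L a))
    (hL' : ∀ p, HasDerivAt (fun t => L t p) (L' p) a) (n : ℕ) :
    HasDerivAt (fun t => hankelDet (L t) n) (hankelDet (L a) n *
      ∑ j ∈ Finset.range n, L' (orthPoly (L a) j * orthPoly (L a) j) / orthNorm (L a) j) a := by
  set p : Fin n → 𝕜[X] := fun i => orthPoly (L a) i
  have hgram (t : 𝕜) : hankelDet (L t) n = Matrix.det (Matrix.of fun i j => L t (p i * p j)) :=
    hankelDet_eq_det_gram (L t) (fun i => natDegree_orthPoly (L a) i)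
      (fun i => monic_orthPoly (L a) i)
  simp only [hgram]
  rw [← Fin.sum_univ_eq_sum_range fun j =>
    L' (orthPoly (L a) j * orthPoly (L a) j) / orthNorm (L a) j]
  exact hasDerivAt_det_of_eq_diagonal (A' := Matrix.of fun i j => L' (p i * p j))
    (fun i j => hL' (p i * p j)) (gram_orthPoly_eq_diagonal hL heven n) fun i => hL i

end OrthPoly

/-! ### Ladder quantities of a Gaussian functional with a gap -/

section Ladder

variable {K : Type*} [Field K]

/-- Integration by parts for the weight `e^{-x²}` with `(-a, a)` excised, as a property of the
functional `L`; the parameter `w` stands for the weight `e^{-a²}` at the edges of the gap. -/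
def IsGappedGaussian (L : K[X] →ₗ[K] K) (a w : K) : Prop :=
  ∀ f : K[X], L (derivative f) = 2 * L (X * f) - w * (f.eval a - f.eval (-a))

/-- The auxiliary quantity `R_n = 2 a w P_n(a)² / h_n` of the ladder operator method. -/
noncomputable def ladderDiag (L : K[X] →ₗ[K] K) (a w : K) (n : ℕ) : K :=
  2 * a * w * (orthPoly L n).eval a ^ 2 / orthNorm L n

/-- The auxiliary quantity `r_n = 2 w P_n(a) P_{n-1}(a) / h_{n-1}` of the ladder operator method,
written with `β_n / h_n` in place of `1 / h_{n-1}` so that `r_0 = 0`. -/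
noncomputable def ladderOffDiag (L : K[X] →ₗ[K] K) (a w : K) (n : ℕ) : K :=
  2 * w * recCoeff L n * (orthPoly L n).eval a * (orthPoly L (n - 1)).eval a / orthNorm L n

/-- The quantity `σ_n = -(R_0 + ⋯ + R_{n-1})`, a multiple of the Christoffel–Darboux kernel on the
diagonal at `a`. -/
noncomputable def ladderSigma (L : K[X] →ₗ[K] K) (a w : K) (n : ℕ) : K :=
  -∑ j ∈ Finset.range n, ladderDiag L a w j

variable {L : K[X] →ₗ[K] K} {a w : K}

lemma ladderSigma_sub_succ (L : K[X] →ₗ[K] K) (a w : K) (n : ℕ) :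
    ladderSigma L a w n - ladderSigma L a w (n + 1) = ladderDiag L a w n := by
  rw [ladderSigma, ladderSigma, Finset.sum_range_succ]
  ring

lemma ladderOffDiag_succ (hL : IsQuasiDefinite L) (a w : K) (n : ℕ) :
    ladderOffDiag L a w (n + 1) =
      2 * w * (orthPoly L (n + 1)).eval a * (orthPoly L n).eval a / orthNorm L n := by
  have h₀ := hL n
  have h₁ := hL (n + 1)
  rw [ladderOffDiag, recCoeff, Nat.add_sub_cancel]
  field_simp

lemma eval_orthPoly_succ (L : K[X] →ₗ[K] K) (a : K) (n : ℕ) :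
    (orthPoly L (n + 1)).eval a =
      a * (orthPoly L n).eval a - recCoeff L n * (orthPoly L (n - 1)).eval a := by
  rw [orthPoly_succ, eval_sub, eval_mul, eval_mul, eval_X, eval_C]

lemma ladderDiag_eq_add (hL : IsQuasiDefinite L) (a w : K) (n : ℕ) :
    ladderDiag L a w n = ladderOffDiag L a w n + ladderOffDiag L a w (n + 1) := by
  rw [ladderOffDiag_succ hL, eval_orthPoly_succ, ladderDiag, ladderOffDiag]
  ring

-- Integrate `(P_{n+1} P_n e^{-x²})'` over the complement of the gap; the two edges contribute
-- equally because `P_{n+1} P_n` is odd.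
lemma IsGappedGaussian.two_mul_orthNorm_succ (hL : IsQuasiDefinite L) (heven : IsEvenFunctional L)
    (hibp : IsGappedGaussian L a w) (n : ℕ) :
    2 * orthNorm L (n + 1) = (n + 1) * orthNorm L n +
      2 * w * (orthPoly L (n + 1)).eval a * (orthPoly L n).eval a := by
  have hderiv : L (derivative (orthPoly L (n + 1)) * orthPoly L n) = (n + 1) * orthNorm L n := by
    have hdeg : (derivative (orthPoly L (n + 1))).natDegree ≤ n :=
      (natDegree_derivative_le _).trans (by rw [natDegree_orthPoly, Nat.add_sub_cancel])
    rw [mul_comm, map_orthPoly_mul hL heven hdeg, coeff_derivative, coeff_orthPoly_self, one_mul]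
  have hderiv' : L (orthPoly L (n + 1) * derivative (orthPoly L n)) = 0 :=
    map_orthPoly_mul_of_degree_lt hL heven
      ((degree_derivative_le).trans_lt (by rw [degree_orthPoly]; exact_mod_cast n.lt_succ_self))
  have hX : L (X * (orthPoly L (n + 1) * orthPoly L n)) = orthNorm L (n + 1) := by
    have hdeg : (X * orthPoly L n).natDegree ≤ n + 1 := by
      rw [natDegree_X_mul (monic_orthPoly L n).ne_zero, natDegree_orthPoly]
    rw [mul_left_comm, map_orthPoly_mul hL heven hdeg, coeff_X_mul, coeff_orthPoly_self, one_mul]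
  have hsign : ((-1 : K) ^ n) * (-1) ^ n = 1 := by rw [← mul_pow]; simp
  have hparts := hibp (orthPoly L (n + 1) * orthPoly L n)
  rw [derivative_mul, map_add, hderiv, hderiv', hX, eval_mul, eval_mul, eval_neg_orthPoly,
    eval_neg_orthPoly] at hparts
  linear_combination (-1 : K) * hparts +
    w * (orthPoly L (n + 1)).eval a * (orthPoly L n).eval a * hsign

lemma IsGappedGaussian.two_mul_recCoeff (hL : IsQuasiDefinite L) (heven : IsEvenFunctional L)
    (hibp : IsGappedGaussian L a w) (n : ℕ) :
    2 * recCoeff L n = n + ladderOffDiag L a w n := by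
  cases n with
  | zero => simp [recCoeff, ladderOffDiag]
  | succ n =>
    have h₀ := hL n
    rw [ladderOffDiag_succ hL, recCoeff]
    field_simp
    push_cast
    linear_combination hibp.two_mul_orthNorm_succ hL heven n

lemma IsGappedGaussian.mul_ladderDiag_pred_mul_ladderDiag (hL : IsQuasiDefinite L)
    (heven : IsEvenFunctional L) (hibp : IsGappedGaussian L a w) (n : ℕ) :
    (n + ladderOffDiag L a w n) * (ladderDiag L a w (n - 1) * ladderDiag L a w n) =
      2 * a ^ 2 * ladderOffDiag L a w n ^ 2 := by
  rw [← hibp.two_mul_recCoeff hL heven]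
  cases n with
  | zero => simp [recCoeff, ladderOffDiag]
  | succ n =>
    have h₀ := hL n
    have h₁ := hL (n + 1)
    rw [ladderOffDiag_succ hL, Nat.add_sub_cancel, ladderDiag, ladderDiag, recCoeff]
    field_simp

lemma IsGappedGaussian.mul_ladderDiag_succ_sub_mul_ladderDiag_pred (hL : IsQuasiDefinite L)
    (heven : IsEvenFunctional L) (hibp : IsGappedGaussian L a w) (n : ℕ) :
    (n + 1 + ladderOffDiag L a w (n + 1)) * ladderDiag L a w (n + 1) -
        (n + ladderOffDiag L a w n) * ladderDiag L a w (n - 1) =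
      2 * a ^ 2 * (ladderOffDiag L a w (n + 1) - ladderOffDiag L a w n) := by
  have h₀ := hL n
  have hsucc : (n + 1 + ladderOffDiag L a w (n + 1)) * ladderDiag L a w (n + 1) =
      4 * a * w * (orthPoly L (n + 1)).eval a ^ 2 / orthNorm L n := by
    have h₁ := hL (n + 1)
    have hβ := hibp.two_mul_recCoeff hL heven (n + 1)
    push_cast at hβ
    rw [← hβ, ladderDiag, recCoeff]
    field_simp
    ring
  have hpred : (n + ladderOffDiag L a w n) * ladderDiag L a w (n - 1) =
      4 * a * w * (recCoeff L n * (orthPoly L (n - 1)).eval a) ^ 2 / orthNorm L n := by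
    rw [← hibp.two_mul_recCoeff hL heven]
    cases n with
    | zero => simp [recCoeff]
    | succ n =>
      have h₁ := hL n
      rw [Nat.add_sub_cancel, ladderDiag, recCoeff]
      field_simp
      ring
  rw [hsucc, hpred, ladderOffDiag_succ hL, ladderOffDiag, eval_orthPoly_succ]
  field_simp
  ring

lemma IsGappedGaussian.ladderSigma_eq (hL : IsQuasiDefinite L) (heven : IsEvenFunctional L)
    (hibp : IsGappedGaussian L a w) (n : ℕ) :
    ladderSigma L a w n = ladderOffDiag L a w n ^ 2 + 2 * a ^ 2 * ladderOffDiag L a w n -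
      (n + ladderOffDiag L a w n) * (ladderDiag L a w (n - 1) + ladderDiag L a w n) := by
  induction n with
  | zero => simp [ladderSigma, ladderOffDiag, recCoeff]
  | succ n ih =>
    have hstep := ladderSigma_sub_succ L a w n
    have hadd := ladderDiag_eq_add hL a w n
    have hcompat := hibp.mul_ladderDiag_succ_sub_mul_ladderDiag_pred hL heven n
    rw [Nat.add_sub_cancel]
    push_cast
    linear_combination ih - hstep + hcompat +
      (ladderOffDiag L a w (n + 1) - ladderOffDiag L a w n) * hadd

-- To be read with `A = R_{n-1}`, `B = R_n`, `N = n`, `r = r_n` and `σ = σ_n`.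
lemma difference_equation_of_ladder {R : Type*} [CommRing R] {a A B N r σ : R}
    (hprod : (N + r) * (A * B) = 2 * a ^ 2 * r ^ 2)
    (hσ : σ = r ^ 2 + 2 * a ^ 2 * r - (N + r) * (A + B)) :
    (A * (B - 2 * a ^ 2) * ((A - 2 * a ^ 2) * B + 4 * N * a ^ 2) -
        8 * a ^ 4 * (σ + N * B)) ^ 2 =
      A * B * (A - 2 * a ^ 2) ^ 2 * (B - 2 * a ^ 2) ^ 2 * (A * B + 8 * N * a ^ 2) := by
  have hbracket : A * (B - 2 * a ^ 2) * ((A - 2 * a ^ 2) * B + 4 * N * a ^ 2) -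
      8 * a ^ 4 * (σ + N * B) = (A - 2 * a ^ 2) * (B - 2 * a ^ 2) * (A * B - 4 * a ^ 2 * r) := by
    linear_combination (-8 * a ^ 4) * hσ + 4 * a ^ 2 * hprod
  have hsq : (A * B - 4 * a ^ 2 * r) ^ 2 = A * B * (A * B + 8 * N * a ^ 2) := by
    linear_combination (-8 * a ^ 2) * hprod
  rw [hbracket, mul_pow, mul_pow, hsq]
  ring

end Ladder

/-! ### The gapped Gaussian functional -/

section GapFunctional

lemma setIntegral_eval_mul_self_pos {μ : Measure ℝ} [NullSingletonClass μ] {s : Set ℝ}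
    (hs : 0 < μ s) {v : ℝ → ℝ} (hv : ∀ x, 0 < v x) {p : ℝ[X]} (hp : p ≠ 0)
    (hint : IntegrableOn (fun x => (p * p).eval x * v x) s μ) :
    0 < ∫ x in s, (p * p).eval x * v x ∂μ := by
  have hnonneg (x : ℝ) : 0 ≤ (p * p).eval x * v x := by
    rw [eval_mul]
    exact mul_nonneg (mul_self_nonneg _) (hv x).le
  have hsupport : Function.support (fun x => (p * p).eval x * v x) ∩ s = s \ p.rootSet ℝ := by
    ext x
    simp [mem_rootSet, hp, (hv x).ne', and_comm]
  rw [setIntegral_pos_iff_support_of_nonneg_ae (.of_forall hnonneg) hint, hsupport,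
    measure_sdiff_null ((p.rootSet_finite ℝ).measure_zero μ)]
  exact hs

lemma hasDerivAt_integral_neg_self {E : Type*} [NormedAddCommGroup E] [NormedSpace ℝ E]
    [CompleteSpace E] {g : ℝ → E} (hg : Continuous g) (a : ℝ) :
    HasDerivAt (fun t => ∫ x in -t..t, g x) (g a + g (-a)) a := by
  have hprim (b : ℝ) : HasDerivAt (fun u => ∫ x in (0 : ℝ)..u, g x) (g b) b :=
    intervalIntegral.integral_hasDerivAt_right (hg.intervalIntegrable _ _)
      (hg.stronglyMeasurableAtFilter _ _) hg.continuousAt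
  have hsplit (t : ℝ) : ∫ x in -t..t, g x = (∫ x in 0..t, g x) - ∫ x in 0..-t, g x :=
    (intervalIntegral.integral_interval_sub_left (hg.intervalIntegrable _ _)
      (hg.intervalIntegrable _ _)).symm
  simp only [hsplit]
  refine ((hprim a).sub ((hprim (-a)).scomp a (hasDerivAt_neg a))).congr_deriv ?_
  rw [neg_one_smul, sub_neg_eq_add]

lemma continuous_eval_mul_exp_neg_sq (p : ℝ[X]) :
    Continuous fun x : ℝ => p.eval x * Real.exp (-x ^ 2) := by
  have := p.continuous
  fun_prop

lemma integrable_eval_mul_exp_neg_sq (p : ℝ[X]) :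
    Integrable fun x : ℝ => p.eval x * Real.exp (-x ^ 2) := by
  induction p using Polynomial.induction_on' with
  | add p q hp hq =>
    simp only [eval_add, add_mul]
    exact hp.add hq
  | monomial n c =>
    have hpow := integrable_rpow_mul_exp_neg_mul_sq one_pos
      ((neg_one_lt_zero (R := ℝ)).trans_le n.cast_nonneg)
    simpa [Real.rpow_natCast, mul_assoc] using hpow.const_mul c

lemma hasDerivAt_eval_mul_exp_neg_sq (p : ℝ[X]) (x : ℝ) :
    HasDerivAt (fun x : ℝ => p.eval x * Real.exp (-x ^ 2))
      ((derivative p - C 2 * (X * p)).eval x * Real.exp (-x ^ 2)) x := by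
  have hexp : HasDerivAt (fun x : ℝ => Real.exp (-x ^ 2)) (Real.exp (-x ^ 2) * (-(2 * x))) x := by
    simpa using ((hasDerivAt_id x).pow 2).neg.exp
  refine ((p.hasDerivAt x).mul hexp).congr_deriv ?_
  simp only [eval_sub, eval_mul, eval_C, eval_X]
  ring

/-- The functional `p ↦ ∫_{|x| ≥ a} p(x) e^{-x²} dx` whose moments are the `gaussMoment a m`. -/
noncomputable def gapFunctional (a : ℝ) : ℝ[X] →ₗ[ℝ] ℝ where
  toFun p := ∫ x in {x : ℝ | a ≤ |x|}, p.eval x * Real.exp (-x ^ 2)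
  map_add' p q := by
    simp only [eval_add, add_mul]
    exact integral_add (integrable_eval_mul_exp_neg_sq p).integrableOn
      (integrable_eval_mul_exp_neg_sq q).integrableOn
  map_smul' c p := by
    simp only [eval_smul, smul_eq_mul, mul_assoc, RingHom.id_apply]
    exact integral_const_mul _ _

lemma gapFunctional_apply (a : ℝ) (p : ℝ[X]) :
    gapFunctional a p = ∫ x in {x : ℝ | a ≤ |x|}, p.eval x * Real.exp (-x ^ 2) :=
  rfl

lemma gaussHankel_eq_hankelDet (n : ℕ) (a : ℝ) :
    gaussHankel n a = hankelDet (gapFunctional a) n := by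
  simp only [gaussHankel, hankelDet, gaussMoment, gapFunctional_apply, eval_pow, eval_X]

lemma isEvenFunctional_gapFunctional (a : ℝ) : IsEvenFunctional (gapFunctional a) := by
  intro p hp
  have hodd (x : ℝ) : p.eval (-x) * Real.exp (-(-x) ^ 2) = -(p.eval x * Real.exp (-x ^ 2)) := by
    have := congrArg (eval x) hp
    rw [eval_comp, eval_neg, eval_X, eval_neg] at this
    rw [this, neg_sq, neg_mul]
  have hreflect := (Measure.measurePreserving_neg volume).setIntegral_preimage_emb
    (MeasurableEquiv.neg ℝ).measurableEmbedding (fun x => p.eval x * Real.exp (-x ^ 2))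
    {x : ℝ | a ≤ |x|}
  simp only [hodd, integral_neg, Set.preimage_ofPred_eq, abs_neg] at hreflect
  exact neg_eq_self.1 hreflect

lemma isQuasiDefinite_gapFunctional (a : ℝ) : IsQuasiDefinite (gapFunctional a) := by
  have hgap : 0 < volume {x : ℝ | a ≤ |x|} := by
    have hsub : Set.Ici a ⊆ {x : ℝ | a ≤ |x|} := fun x hx => le_trans hx (le_abs_self x)
    exact lt_of_lt_of_le (by simp) (measure_mono hsub)
  exact fun n => (setIntegral_eval_mul_self_pos hgap (fun x => Real.exp_pos _)
    (monic_orthPoly _ n).ne_zero (integrable_eval_mul_exp_neg_sq _).integrableOn).ne'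

lemma gapFunctional_eq_integral_sub {a : ℝ} (ha : 0 ≤ a) (p : ℝ[X]) :
    gapFunctional a p = (∫ x, p.eval x * Real.exp (-x ^ 2)) -
      ∫ x in -a..a, p.eval x * Real.exp (-x ^ 2) := by
  have hcompl : {x : ℝ | a ≤ |x|} = (Set.Ioo (-a) a)ᶜ := by
    ext x
    simp only [Set.mem_ofPred_eq, Set.mem_compl_iff, Set.mem_Ioo, ← abs_lt, not_lt]
  rw [gapFunctional_apply, hcompl,
    setIntegral_compl measurableSet_Ioo (integrable_eval_mul_exp_neg_sq p),
    intervalIntegral.integral_of_le (neg_le_self ha), integral_Ioc_eq_integral_Ioo]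

lemma isGappedGaussian_gapFunctional {a : ℝ} (ha : 0 ≤ a) :
    IsGappedGaussian (gapFunctional a) a (Real.exp (-a ^ 2)) := by
  intro f
  set g : ℝ[X] := derivative f - C 2 * (X * f)
  have hline : ∫ x, g.eval x * Real.exp (-x ^ 2) = 0 :=
    integral_eq_zero_of_hasDerivAt_of_integrable (hasDerivAt_eval_mul_exp_neg_sq f)
      (integrable_eval_mul_exp_neg_sq g) (integrable_eval_mul_exp_neg_sq f)
  have hinside : ∫ x in -a..a, g.eval x * Real.exp (-x ^ 2) =
      f.eval a * Real.exp (-a ^ 2) - f.eval (-a) * Real.exp (-(-a) ^ 2) :=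
    intervalIntegral.integral_eq_sub_of_hasDerivAt
      (fun x _ => hasDerivAt_eval_mul_exp_neg_sq f x)
      ((continuous_eval_mul_exp_neg_sq g).intervalIntegrable _ _)
  have hgap := gapFunctional_eq_integral_sub ha g
  rw [hline, hinside, map_sub, linearMap_C_mul, neg_sq] at hgap
  linear_combination hgap

lemma hasDerivAt_gapFunctional {a : ℝ} (ha : 0 < a) (p : ℝ[X]) :
    HasDerivAt (fun t => gapFunctional t p)
      (-((p.eval a + p.eval (-a)) * Real.exp (-a ^ 2))) a := by
  have hlocal : (fun t => gapFunctional t p) =ᶠ[nhds a] fun t =>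
      (∫ x, p.eval x * Real.exp (-x ^ 2)) - ∫ x in -t..t, p.eval x * Real.exp (-x ^ 2) := by
    filter_upwards [lt_mem_nhds ha] with t ht
    exact gapFunctional_eq_integral_sub ht.le p
  refine (((hasDerivAt_integral_neg_self (continuous_eval_mul_exp_neg_sq p) a).const_sub
    _).congr_of_eventuallyEq hlocal).congr_deriv ?_
  rw [neg_sq, add_mul]

lemma mul_deriv_log_gaussHankel {a : ℝ} (ha : 0 < a) (n : ℕ) :
    a * deriv (fun t => Real.log (gaussHankel n t)) a =
      ladderSigma (gapFunctional a) a (Real.exp (-a ^ 2)) n := by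
  have hL := isQuasiDefinite_gapFunctional a
  have heven := isEvenFunctional_gapFunctional a
  have hne : hankelDet (gapFunctional a) n ≠ 0 := by
    rw [hankelDet_eq_prod_orthNorm hL heven]
    exact Finset.prod_ne_zero_iff.2 fun j _ => hL j
  have hsign (j : ℕ) : ((-1 : ℝ) ^ j) * (-1) ^ j = 1 := by rw [← mul_pow]; simp
  simp only [gaussHankel_eq_hankelDet]
  rw [((hasDerivAt_hankelDet hL heven (hasDerivAt_gapFunctional ha) n).log hne).deriv,
    mul_div_cancel_left₀ _ hne, ladderSigma, Finset.mul_sum, ← Finset.sum_neg_distrib]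
  refine Finset.sum_congr rfl fun j _ => ?_
  rw [ladderDiag, eval_mul, eval_mul, eval_neg_orthPoly]
  linear_combination (-a * Real.exp (-a ^ 2) * (orthPoly (gapFunctional a) j).eval a ^ 2 /
    orthNorm (gapFunctional a) j) * hsign j

end GapFunctional

theorem gue_sigma_difference_equation (a : ℝ) (ha : 0 < a) (n : ℕ) (hn : 1 ≤ n)
    (σ : ℕ → ℝ)
    (hσ : ∀ m, σ m = a * deriv (fun x => Real.log (gaussHankel m x)) a) :
    ((σ (n - 1) - σ n) * (σ n - σ (n + 1) - 2 * a ^ 2) *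
        ((σ (n - 1) - σ n - 2 * a ^ 2) * (σ n - σ (n + 1)) + 4 * (n : ℝ) * a ^ 2) -
      8 * a ^ 4 * (σ n + (n : ℝ) * (σ n - σ (n + 1)))) ^ 2 =
    (σ (n - 1) - σ n) * (σ n - σ (n + 1)) * (σ (n - 1) - σ n - 2 * a ^ 2) ^ 2 *
      (σ n - σ (n + 1) - 2 * a ^ 2) ^ 2 *
      ((σ (n - 1) - σ n) * (σ n - σ (n + 1)) + 8 * (n : ℝ) * a ^ 2) := by
  let w := Real.exp (-a ^ 2)
  let L := gapFunctional a
  have hL : IsQuasiDefinite L := isQuasiDefinite_gapFunctional a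
  have heven : IsEvenFunctional L := isEvenFunctional_gapFunctional a
  have hibp : IsGappedGaussian L a w := isGappedGaussian_gapFunctional ha.le
  have hladder (m : ℕ) : σ m = ladderSigma L a w m := (hσ m).trans (mul_deriv_log_gaussHankel ha m)
  have hB (m : ℕ) : σ m - σ (m + 1) = ladderDiag L a w m := by
    rw [hladder, hladder, ladderSigma_sub_succ]
  have hA : σ (n - 1) - σ n = ladderDiag L a w (n - 1) := by
    simpa only [Nat.sub_add_cancel hn] using hB (n - 1)
  rw [hA, hB, hladder]
  exact difference_equation_of_ladder (hibp.mul_ladderDiag_pred_mul_ladderDiag hL heven n)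
    (hibp.ladderSigma_eq hL heven n)
end

section
/- Let t > 0, α > −1 and n ≥ 1, let P_n(x; t, α) be the monic orthogonal polynomial of degree n for the weight x^α e^{−x} on [t, ∞), and let h_n(t, α) := ∫_t^∞ P_n(y; t, α)² y^α e^{−y} dy. Then α ∫_t^∞ P_n(y; t, α)² y^{α−1} e^{−y} dy = h_n(t, α) − P_n(t; t, α)² t^α e^{−t}. -/
open MeasureTheory

/-! The product `P² x ^ α exp (-x)` vanishes at infinity, so the integral of its derivative over
`(t, ∞)` is minus its value at `t`. The derivative has three terms, one for each factor. The one
coming from `(P²)' = 2 P P'` integrates to zero, because `P'` has smaller degree than `P`; the other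
two integrals are those in the identity. -/

lemma integral_mul_eval_eq_zero_of_degree_lt {μ : Measure ℝ} {f : ℝ → ℝ} {n : ℕ} {Q : Polynomial ℝ}
    (hintegrable : ∀ k < n, Integrable (fun x ↦ f x * x ^ k) μ)
    (horth : ∀ k < n, ∫ x, f x * x ^ k ∂μ = 0) (hQ : Q.degree < n) :
    ∫ x, f x * Q.eval x ∂μ = 0 := by
  have hlt : ∀ k ∈ Q.support, k < n := fun k hk ↦
    Nat.cast_lt.mp ((Polynomial.le_degree_of_mem_supp k hk).trans_lt hQ)
  calc ∫ x, f x * Q.eval x ∂μ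
      = ∫ x, ∑ k ∈ Q.support, Q.coeff k * (f x * x ^ k) ∂μ := by
        simp only [Polynomial.eval_eq_sum, Polynomial.sum_def, Finset.mul_sum, mul_left_comm]
    _ = ∑ k ∈ Q.support, Q.coeff k * ∫ x, f x * x ^ k ∂μ := by
        rw [integral_finsetSum _ fun k hk ↦ (hintegrable k (hlt k hk)).const_mul _]
        simp only [integral_const_mul]
    _ = 0 := Finset.sum_eq_zero fun k hk ↦ by rw [horth k (hlt k hk), mul_zero]

section LaguerreWeight

variable {t : ℝ}

lemma integrableOn_Ioi_rpow_mul_exp_neg (ht : 0 < t) (s : ℝ) :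
    IntegrableOn (fun x : ℝ ↦ x ^ s * Real.exp (-x)) (Set.Ioi t) := by
  refine integrable_of_isBigO_exp_neg one_half_pos ?_ ?_
  · exact (continuousOn_id.rpow_const fun x hx ↦ Or.inl (ht.trans_le hx).ne').mul (by fun_prop)
  · simpa only [mul_comm] using (Real.Gamma_integrand_isLittleO s).isBigO

lemma integrableOn_Ioi_eval_mul_rpow_mul_exp_neg (ht : 0 < t) (Q : Polynomial ℝ) (s : ℝ) :
    IntegrableOn (fun x ↦ Q.eval x * x ^ s * Real.exp (-x)) (Set.Ioi t) := by
  induction Q using Polynomial.induction_on' with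
  | add p q hp hq =>
    simp only [Polynomial.eval_add, add_mul]
    exact Integrable.fun_add hp hq
  | monomial k c =>
    have hmonomial : IntegrableOn (fun x ↦ c * (x ^ (k + s) * Real.exp (-x))) (Set.Ioi t) :=
      (integrableOn_Ioi_rpow_mul_exp_neg ht (k + s)).const_mul c
    refine hmonomial.congr_fun (fun x hx ↦ ?_) measurableSet_Ioi
    simp only [Polynomial.eval_monomial, Real.rpow_add (ht.trans hx), Real.rpow_natCast, mul_assoc]

lemma hasDerivAt_eval_mul_rpow_mul_exp_neg (Q : Polynomial ℝ) (α : ℝ) {x : ℝ} (hx : x ≠ 0) :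
    HasDerivAt (fun y ↦ Q.eval y * y ^ α * Real.exp (-y))
      (Q.derivative.eval x * x ^ α * Real.exp (-x)
        + α * (Q.eval x * x ^ (α - 1) * Real.exp (-x))
        - Q.eval x * x ^ α * Real.exp (-x)) x := by
  have hrpow := Real.hasDerivAt_rpow_const (p := α) (Or.inl hx)
  refine (((Q.hasDerivAt x).mul hrpow).mul (hasDerivAt_neg x).exp).congr_deriv ?_
  simp only [Pi.mul_apply]
  ring

lemma mul_integral_Ioi_eval_mul_rpow_sub_one_mul_exp_neg (ht : 0 < t) (Q : Polynomial ℝ) (α : ℝ) :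
    α * ∫ x in Set.Ioi t, Q.eval x * x ^ (α - 1) * Real.exp (-x) =
      (∫ x in Set.Ioi t, Q.eval x * x ^ α * Real.exp (-x))
        - (∫ x in Set.Ioi t, Q.derivative.eval x * x ^ α * Real.exp (-x))
        - Q.eval t * t ^ α * Real.exp (-t) := by
  have hQ := integrableOn_Ioi_eval_mul_rpow_mul_exp_neg ht Q α
  have hQ' := integrableOn_Ioi_eval_mul_rpow_mul_exp_neg ht Q.derivative α
  have hrpow := (integrableOn_Ioi_eval_mul_rpow_mul_exp_neg ht Q (α - 1)).const_mul α
  have hderiv (x : ℝ) (hx : x ∈ Set.Ici t) :=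
    hasDerivAt_eval_mul_rpow_mul_exp_neg Q α (ht.trans_le hx).ne'
  have hsum := Integrable.fun_add hQ' hrpow
  have hintegrable := hsum.sub hQ
  have hlim := tendsto_zero_of_hasDerivAt_of_integrableOn_Ioi
    (fun x hx ↦ hderiv x (Set.mem_Ici_of_Ioi hx)) hintegrable hQ
  have hFTC := integral_Ioi_of_hasDerivAt_of_tendsto' hderiv hintegrable hlim
  rw [integral_sub hsum hQ, integral_add hQ' hrpow, integral_const_mul] at hFTC
  linarith

lemma integral_Ioi_eval_mul_mul_rpow_mul_exp_neg_eq_zero_of_degree_lt (ht : 0 < t) {α : ℝ} {n : ℕ}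
    {P Q : Polynomial ℝ}
    (horth : ∀ k < n, ∫ x in Set.Ioi t, P.eval x * x ^ ((k : ℝ) + α) * Real.exp (-x) = 0)
    (hQ : Q.degree < n) :
    ∫ x in Set.Ioi t, (P * Q).eval x * x ^ α * Real.exp (-x) = 0 := by
  have hpow (k : ℕ) : Set.EqOn (fun x ↦ P.eval x * x ^ ((k : ℝ) + α) * Real.exp (-x))
      (fun x ↦ P.eval x * x ^ α * Real.exp (-x) * x ^ k) (Set.Ioi t) := fun x hx ↦ by
    simp only [Real.rpow_add (ht.trans hx), Real.rpow_natCast]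
    ring
  have hzero := integral_mul_eval_eq_zero_of_degree_lt
    (fun k _ ↦ (integrableOn_Ioi_eval_mul_rpow_mul_exp_neg ht P (k + α)).congr_fun (hpow k)
      measurableSet_Ioi)
    (fun k hk ↦ (setIntegral_congr_fun measurableSet_Ioi (hpow k)).symm.trans (horth k hk)) hQ
  simpa only [Polynomial.eval_mul, mul_right_comm] using hzero

end LaguerreWeight

theorem laguerre_norm_identity_general {t : ℝ} (ht : 0 < t) (α : ℝ) (P : Polynomial ℝ)
    (horth : ∀ k < P.natDegree,
      ∫ x in Set.Ioi t, P.eval x * x ^ ((k : ℝ) + α) * Real.exp (-x) = 0) :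
    α * ∫ y in Set.Ioi t, (P.eval y) ^ 2 * y ^ (α - 1) * Real.exp (-y) =
      (∫ y in Set.Ioi t, (P.eval y) ^ 2 * y ^ α * Real.exp (-y))
        - (P.eval t) ^ 2 * t ^ α * Real.exp (-t) := by
  rcases eq_or_ne P 0 with rfl | hP
  · simp
  have hzero : ∫ x in Set.Ioi t, (P ^ 2).derivative.eval x * x ^ α * Real.exp (-x) = 0 := by
    rw [Polynomial.derivative_sq, mul_comm (Polynomial.C 2) P, mul_assoc]
    refine integral_Ioi_eval_mul_mul_rpow_mul_exp_neg_eq_zero_of_degree_lt ht horth ?_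
    rw [Polynomial.degree_C_mul two_ne_zero, ← Polynomial.degree_eq_natDegree hP]
    exact Polynomial.degree_derivative_lt hP
  have hparts := mul_integral_Ioi_eval_mul_rpow_sub_one_mul_exp_neg ht (P ^ 2) α
  rw [hzero, sub_zero] at hparts
  simpa only [Polynomial.eval_pow] using hparts

theorem laguerre_norm_identity (t α : ℝ) (ht : 0 < t) (hα : -1 < α)
    (n : ℕ) (hn : 1 ≤ n) (P : Polynomial ℝ) (hmonic : P.Monic) (hdeg : P.natDegree = n)
    (horth : ∀ k : ℕ, k < n →
      ∫ x in Set.Ioi t, P.eval x * x ^ ((k : ℝ) + α) * Real.exp (-x) = 0)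
    (h : ℝ) (hh : h = ∫ y in Set.Ioi t, (P.eval y) ^ 2 * y ^ α * Real.exp (-y)) :
    α * ∫ y in Set.Ioi t, (P.eval y) ^ 2 * y ^ (α - 1) * Real.exp (-y) =
      h - (P.eval t) ^ 2 * t ^ α * Real.exp (-t) := by
  subst hh hdeg
  exact laguerre_norm_identity_general ht α P horth
end

section
/- Let t > 0, α > 0 and n ≥ 0, let P_n(x; t, α) be the monic orthogonal polynomial of degree n for the weight x^α e^{−x} on [t, ∞), let h_n(t, α) := ∫_t^∞ P_n(y; t, α)² y^α e^{−y} dy, and define R_n(t) := P_n(t; t, α)² t^α e^{−t} / h_n(t, α). Then 0 ≤ R_n(t) < 1. -/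
open MeasureTheory

/-!
Write `w α x = x ^ α * exp (-x)`, so that `(w α)' = α * w (α - 1) - w α`. Orthogonality makes the
term `2 * P * P' * w α` of `(P ^ 2 * w α)'` integrate to zero over `(t, ∞)`, because
`deg P' < deg P`. The fundamental theorem of calculus therefore gives
`P(t) ^ 2 * w α t = ∫ P ^ 2 * w α - α * ∫ P ^ 2 * w (α - 1)`, where the integrals are positive.
-/

section GeneralWeight

open Polynomial

variable {μ : Measure ℝ} {f w w' : ℝ → ℝ} {a : ℝ} {P Q : ℝ[X]} {n : ℕ}

lemma integrable_eval_mul (hf : ∀ k : ℕ, Integrable (fun x ↦ x ^ k * f x) μ) (Q : ℝ[X]) :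
    Integrable (fun x ↦ Q.eval x * f x) μ := by
  simp only [eval_eq_sum, Polynomial.sum, Finset.sum_mul, mul_assoc]
  exact integrable_finsetSum _ fun k _ ↦ (hf k).const_mul _

lemma integrable_sq_eval_mul (hf : ∀ k : ℕ, Integrable (fun x ↦ x ^ k * f x) μ) (P : ℝ[X]) :
    Integrable (fun x ↦ P.eval x ^ 2 * f x) μ := by
  simp only [← eval_pow]
  exact integrable_eval_mul hf (P ^ 2)

lemma integral_eval_mul_eq_zero_of_degree_lt
    (hf : ∀ k < n, Integrable (fun x ↦ x ^ k * f x) μ)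
    (horth : ∀ k < n, ∫ x, x ^ k * f x ∂μ = 0) (hQ : Q.degree < n) :
    ∫ x, Q.eval x * f x ∂μ = 0 := by
  have lt_of_mem {k : ℕ} (hk : k ∈ Q.support) : k < n :=
    Nat.cast_lt.1 ((le_degree_of_mem_supp k hk).trans_lt hQ)
  simp only [eval_eq_sum, Polynomial.sum, Finset.sum_mul, mul_assoc]
  rw [integral_finsetSum _ fun k hk ↦ (hf k (lt_of_mem hk)).const_mul _]
  refine Finset.sum_eq_zero fun k hk ↦ ?_
  rw [integral_const_mul, horth k (lt_of_mem hk), mul_zero]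

lemma ae_eval_ne_zero [NullSingletonClass μ] (hP : P ≠ 0) : ∀ᵐ x ∂μ, P.eval x ≠ 0 :=
  (finite_setOfPred_isRoot hP).countable.ae_notMem μ

lemma integral_sq_eval_mul_pos [NullSingletonClass μ] [NeZero μ]
    (hw : Integrable (fun x ↦ P.eval x ^ 2 * w x) μ) (hpos : ∀ᵐ x ∂μ, 0 < w x) (hP : P ≠ 0) :
    0 < ∫ x, P.eval x ^ 2 * w x ∂μ := by
  have integrand_pos : ∀ᵐ x ∂μ, 0 < P.eval x ^ 2 * w x := by
    filter_upwards [hpos, ae_eval_ne_zero hP] with x hwx hPx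
    positivity
  have nonneg : 0 ≤ᵐ[μ] fun x ↦ P.eval x ^ 2 * w x := integrand_pos.mono fun _ h ↦ h.le
  refine (integral_nonneg_of_ae nonneg).lt_of_ne' fun hzero ↦ ?_
  obtain ⟨x, hx_pos, hx_zero⟩ :=
    (integrand_pos.and ((integral_eq_zero_iff_of_nonneg_ae nonneg hw).1 hzero)).exists
  exact hx_pos.ne' hx_zero

lemma integral_eval_derivative_mul_eq_zero
    (hw : ∀ k : ℕ, Integrable (fun x ↦ x ^ k * w x) μ)
    (horth : ∀ k < P.natDegree, ∫ x, x ^ k * (P.eval x * w x) ∂μ = 0) :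
    ∫ x, P.derivative.eval x * (P.eval x * w x) ∂μ = 0 := by
  obtain rfl | hP := eq_or_ne P 0
  · simp
  refine integral_eval_mul_eq_zero_of_degree_lt (fun k _ ↦ ?_) horth
    ((degree_derivative_lt hP).trans_eq (degree_eq_natDegree hP))
  have moment := integrable_eval_mul hw (X ^ k * P)
  simpa only [eval_mul, eval_pow, eval_X, mul_assoc] using moment

lemma integral_Ioi_sq_eval_mul_deriv (hcont : ContinuousWithinAt w (Set.Ici a) a)
    (hderiv : ∀ x ∈ Set.Ioi a, HasDerivAt w (w' x) x)
    (hw : ∀ k : ℕ, IntegrableOn (fun x ↦ x ^ k * w x) (Set.Ioi a))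
    (hw' : IntegrableOn (fun x ↦ P.eval x ^ 2 * w' x) (Set.Ioi a))
    (horth : ∀ k < P.natDegree, ∫ x in Set.Ioi a, x ^ k * (P.eval x * w x) = 0) :
    ∫ x in Set.Ioi a, P.eval x ^ 2 * w' x = -(P.eval a ^ 2 * w a) := by
  have int_sq := integrable_sq_eval_mul hw P
  have int_cross :
      IntegrableOn (fun x ↦ 2 * (P.derivative.eval x * (P.eval x * w x))) (Set.Ioi a) := by
    simpa only [eval_mul, mul_assoc] using! (integrable_eval_mul hw (P.derivative * P)).const_mul 2
  have hasDerivAt_sq : ∀ x ∈ Set.Ioi a, HasDerivAt (fun x ↦ P.eval x ^ 2 * w x)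
      (2 * (P.derivative.eval x * (P.eval x * w x)) + P.eval x ^ 2 * w' x) x := fun x hx ↦
    (((P.hasDerivAt x).fun_pow 2).mul (hderiv x hx)).congr_deriv (by norm_num only; ring)
  have ftc := integral_Ioi_of_hasDerivAt_of_tendsto
    ((P.continuous.pow 2).continuousWithinAt.mul hcont) hasDerivAt_sq (int_cross.add hw')
    (tendsto_zero_of_hasDerivAt_of_integrableOn_Ioi hasDerivAt_sq (int_cross.add hw') int_sq)
  rwa [integral_add int_cross hw', integral_const_mul,
    integral_eval_derivative_mul_eq_zero hw horth, mul_zero, zero_add, zero_sub] at ftc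

end GeneralWeight

/-- The Laguerre weight `x ^ α * exp (-x)` of exponent `α`, as a function on all of `ℝ`; it is only
meaningful for `0 ≤ x`, where the real power is the usual one. -/
noncomputable def laguerreWeight (α x : ℝ) : ℝ := x ^ α * Real.exp (-x)

section LaguerreWeight

open Polynomial

variable {α t x : ℝ} {P : ℝ[X]}

lemma laguerreWeight_pos (hx : 0 < x) : 0 < laguerreWeight α x := by
  unfold laguerreWeight
  positivity

lemma laguerreWeight_nonneg (hx : 0 ≤ x) : 0 ≤ laguerreWeight α x := by
  unfold laguerreWeight
  positivity

lemma continuous_laguerreWeight (hα : 0 ≤ α) : Continuous (laguerreWeight α) :=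
  (Real.continuous_rpow_const hα).mul (by fun_prop)

lemma pow_mul_laguerreWeight (hx : 0 < x) (k : ℕ) :
    x ^ k * laguerreWeight α x = laguerreWeight (k + α) x := by
  simp only [laguerreWeight, Real.rpow_add hx, Real.rpow_natCast, mul_assoc]

lemma hasDerivAt_laguerreWeight (hx : x ≠ 0) :
    HasDerivAt (laguerreWeight α) (α * laguerreWeight (α - 1) x - laguerreWeight α x) x :=
  ((Real.hasDerivAt_rpow_const (Or.inl hx)).mul (hasDerivAt_neg x).exp).congr_deriv
    (by simp only [laguerreWeight]; ring)

lemma integrableOn_laguerreWeight (hα : -1 < α) :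
    IntegrableOn (laguerreWeight α) (Set.Ioi 0) := by
  simpa only [laguerreWeight, add_sub_cancel_right, mul_comm] using!
    Real.GammaIntegral_convergent (neg_lt_iff_pos_add.1 hα)

lemma integrableOn_pow_mul_laguerreWeight (hα : -1 < α) (ht : 0 ≤ t) (k : ℕ) :
    IntegrableOn (fun x ↦ x ^ k * laguerreWeight α x) (Set.Ioi t) := by
  have hkα : -1 < k + α := by linarith [k.cast_nonneg (α := ℝ)]
  exact ((integrableOn_laguerreWeight hkα).mono_set (Set.Ioi_subset_Ioi ht)).congr_fun
    (fun x hx ↦ (pow_mul_laguerreWeight (ht.trans_lt hx) k).symm) measurableSet_Ioi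

lemma integrableOn_sq_eval_mul_laguerreWeight (hα : -1 < α) (ht : 0 ≤ t) (P : ℝ[X]) :
    IntegrableOn (fun x ↦ P.eval x ^ 2 * laguerreWeight α x) (Set.Ioi t) :=
  integrable_sq_eval_mul (integrableOn_pow_mul_laguerreWeight hα ht) P

lemma integral_sq_eval_mul_laguerreWeight_pos (hα : -1 < α) (ht : 0 ≤ t) (hP : P ≠ 0) :
    0 < ∫ x in Set.Ioi t, P.eval x ^ 2 * laguerreWeight α x := by
  have : NeZero (volume (Set.Ioi t)) := ⟨by simp⟩
  refine integral_sq_eval_mul_pos (integrableOn_sq_eval_mul_laguerreWeight hα ht P) ?_ hP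
  filter_upwards [ae_restrict_mem measurableSet_Ioi] with x hx
  exact laguerreWeight_pos (ht.trans_lt hx)

lemma sq_eval_mul_laguerreWeight_eq (hα : 0 < α) (ht : 0 ≤ t)
    (horth : ∀ k < P.natDegree,
      ∫ x in Set.Ioi t, x ^ k * (P.eval x * laguerreWeight α x) = 0) :
    P.eval t ^ 2 * laguerreWeight α t =
      (∫ x in Set.Ioi t, P.eval x ^ 2 * laguerreWeight α x) -
        α * ∫ x in Set.Ioi t, P.eval x ^ 2 * laguerreWeight (α - 1) x := by
  have moments := integrableOn_pow_mul_laguerreWeight (neg_one_lt_zero.trans hα) ht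
  have int_sq := integrable_sq_eval_mul moments P
  have int_sq' :=
    (integrableOn_sq_eval_mul_laguerreWeight (α := α - 1) (by linarith) ht P).const_mul α
  have parts := integral_Ioi_sq_eval_mul_deriv
    (continuous_laguerreWeight hα.le).continuousWithinAt
    (fun x hx ↦ hasDerivAt_laguerreWeight (ht.trans_lt hx).ne') moments
    (by simpa only [mul_sub, mul_left_comm _ α] using! int_sq'.sub int_sq) horth
  simp only [mul_sub, mul_left_comm _ α] at parts
  rw [integral_sub int_sq' int_sq, integral_const_mul] at parts
  linarith

lemma sq_eval_mul_laguerreWeight_lt_integral (hα : 0 < α) (ht : 0 ≤ t) (hP : P ≠ 0)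
    (horth : ∀ k < P.natDegree,
      ∫ x in Set.Ioi t, x ^ k * (P.eval x * laguerreWeight α x) = 0) :
    P.eval t ^ 2 * laguerreWeight α t <
      ∫ x in Set.Ioi t, P.eval x ^ 2 * laguerreWeight α x := by
  rw [sq_eval_mul_laguerreWeight_eq hα ht horth]
  exact sub_lt_self _
    (mul_pos hα (integral_sq_eval_mul_laguerreWeight_pos (by linarith) ht hP))

end LaguerreWeight

theorem laguerre_Rn_bounds (t α : ℝ) (ht : 0 < t) (hα : 0 < α)
    (n : ℕ) (P : Polynomial ℝ) (hmonic : P.Monic) (hdeg : P.natDegree = n)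
    (horth : ∀ k : ℕ, k < n →
      ∫ x in Set.Ioi t, P.eval x * x ^ ((k : ℝ) + α) * Real.exp (-x) = 0)
    (R : ℝ)
    (hR : R = (P.eval t) ^ 2 * t ^ α * Real.exp (-t) /
      ∫ y in Set.Ioi t, (P.eval y) ^ 2 * y ^ α * Real.exp (-y)) :
    0 ≤ R ∧ R < 1 := by
  have hR' : R = P.eval t ^ 2 * laguerreWeight α t /
      ∫ x in Set.Ioi t, P.eval x ^ 2 * laguerreWeight α x := by
    simpa only [laguerreWeight, mul_assoc] using hR
  have horth' : ∀ k < P.natDegree,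
      ∫ x in Set.Ioi t, x ^ k * (P.eval x * laguerreWeight α x) = 0 := fun k hk ↦ by
    rw [← horth k (hdeg ▸ hk)]
    refine setIntegral_congr_fun measurableSet_Ioi fun x hx ↦ ?_
    simp only [mul_left_comm _ (P.eval x), pow_mul_laguerreWeight (ht.trans hx)]
    simp only [laguerreWeight, mul_assoc]
  have numerator_nonneg : 0 ≤ P.eval t ^ 2 * laguerreWeight α t :=
    mul_nonneg (sq_nonneg _) (laguerreWeight_nonneg ht.le)
  have numerator_lt :=
    sq_eval_mul_laguerreWeight_lt_integral hα ht.le hmonic.ne_zero horth'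
  rw [hR']
  exact ⟨div_nonneg numerator_nonneg (numerator_nonneg.trans numerator_lt.le),
    (div_lt_one (numerator_nonneg.trans_lt numerator_lt)).2 numerator_lt⟩
end

section
/- Fix α > 0 and t > 0. Then there exist N ∈ ℕ and C > 0 such that for every integer n ≥ N the quartic relation b ( b − 2(2n+α) − t )² = 4 α² t has a unique solution b_n in the open interval (4n, 4n + 2α + t), and this solution satisfies | b_n − ( 4n + 2α + t − α √t · n^{−1/2} ) | ≤ C n^{−3/2}. -/
/-!
Put `M = 4n + 2α + t`, so that the equation reads `b (M - b)² = 4α²t`. The left side is strictly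
decreasing on `[M/3, M]`, vanishes at `M`, and exceeds `4α²t` at `4n` once `2α + t ≤ 8n`; this gives
the unique solution in `(4n, M)`. Taking square roots, `b = M - 2α√t b^(-1/2)`, while the claimed
main term is `M - 2α√t (4n)^(-1/2)`. The tangent line to the convex function `x ↦ x^(-1/2)` at `4n`
bounds the difference by `α√t (b - 4n) (4n)^(-3/2)`, and `b - 4n < 2α + t`.
-/

open Set

theorem strictAntiOn_mul_sub_sq {K : Type*} [Field K] [LinearOrder K] [IsStrictOrderedRing K]
    (M : K) : StrictAntiOn (fun b ↦ b * (M - b) ^ 2) (Icc (M / 3) M) := by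
  rintro x ⟨hx, -⟩ y ⟨-, hy⟩ hxy
  have factored : x * (M - x) ^ 2 - y * (M - y) ^ 2 =
      (y - x) * (M * (2 * M - x - y) - (M - x) ^ 2 - (M - x) * (M - y) - (M - y) ^ 2) := by ring
  have cofactor_pos :
      0 < M * (2 * M - x - y) - (M - x) ^ 2 - (M - x) * (M - y) - (M - y) ^ 2 := by
    have hM : 3 / 2 * (M - x) ≤ M := by linarith
    calc 0 < (y - x) * ((M - x) + 2 * (M - y)) / 2 := by
          have := mul_pos (sub_pos.2 hxy) (show 0 < (M - x) + 2 * (M - y) by linarith)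
          positivity
      _ = 3 / 2 * (M - x) * (2 * M - x - y) - (M - x) ^ 2 - (M - x) * (M - y) - (M - y) ^ 2 := by
          ring
      _ ≤ M * (2 * M - x - y) - (M - x) ^ 2 - (M - x) * (M - y) - (M - y) ^ 2 := by
          gcongr
          linarith
  exact sub_pos.1 (factored ▸ mul_pos (sub_pos.2 hxy) cofactor_pos)

theorem existsUnique_mul_sub_sq_eq {a M c : ℝ} (ha : a ∈ Icc (M / 3) M)
    (hc : c ∈ Ioo 0 (a * (M - a) ^ 2)) : ∃! b, b ∈ Ioo a M ∧ b * (M - b) ^ 2 = c := by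
  have hcont : ContinuousOn (fun b ↦ b * (M - b) ^ 2) (Icc a M) := by fun_prop
  obtain ⟨b, hb, hbc⟩ := intermediate_value_Ioo' ha.2 hcont (by simpa using hc)
  have mem_Icc {x : ℝ} (hx : x ∈ Ioo a M) : x ∈ Icc (M / 3) M := ⟨ha.1.trans hx.1.le, hx.2.le⟩
  exact ⟨b, ⟨hb, hbc⟩, fun y ⟨hy, hyc⟩ ↦
    (strictAntiOn_mul_sub_sq M).injOn (mem_Icc hy) (mem_Icc hb) (hyc.trans hbc.symm)⟩

theorem one_add_mul_sub_one_le_rpow_of_nonpos {x p : ℝ} (hx : 0 < x) (hp : p ≤ 0) :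
    1 + p * (x - 1) ≤ x ^ p :=
  calc 1 + p * (x - 1) ≤ 1 + p * Real.log x :=
        add_le_add_right (mul_le_mul_of_nonpos_left (Real.log_le_sub_one_of_pos hx) hp) 1
    _ = Real.log x * p + 1 := by ring
    _ ≤ Real.exp (Real.log x * p) := Real.add_one_le_exp _
    _ = x ^ p := (Real.rpow_def_of_pos hx p).symm

theorem rpow_add_mul_sub_le_rpow_of_nonpos {a b p : ℝ} (ha : 0 < a) (hb : 0 < b) (hp : p ≤ 0) :
    a ^ p + p * a ^ (p - 1) * (b - a) ≤ b ^ p :=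
  calc a ^ p + p * a ^ (p - 1) * (b - a) = a ^ p * (1 + p * (b / a - 1)) := by
        rw [Real.rpow_sub_one ha.ne']
        field_simp
    _ ≤ a ^ p * (b / a) ^ p := by
        gcongr
        exact one_add_mul_sub_one_le_rpow_of_nonpos (div_pos hb ha) hp
    _ = b ^ p := by
        rw [← Real.mul_rpow ha.le (div_pos hb ha).le, mul_div_cancel₀ b ha.ne']

theorem sub_eq_mul_rpow_of_mul_sub_sq_eq {b k M : ℝ} (hb : 0 < b) (hbM : b ≤ M) (hk : 0 ≤ k)
    (h : b * (M - b) ^ 2 = k ^ 2) : M - b = k * b ^ (-(1 / 2) : ℝ) := by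
  have hsqrt : √b * (M - b) = k := by
    rw [← sq_eq_sq₀ (mul_nonneg (Real.sqrt_nonneg b) (sub_nonneg.2 hbM)) hk, mul_pow,
      Real.sq_sqrt hb.le, h]
  rw [Real.rpow_neg hb.le, ← Real.sqrt_eq_rpow, ← hsqrt, mul_comm √b,
    mul_inv_cancel_right₀ (Real.sqrt_ne_zero'.2 hb)]

theorem abs_sub_sub_mul_rpow_le_of_mul_sub_sq_eq {a b k M : ℝ} (ha : 0 < a) (hb : b ∈ Icc a M)
    (hk : 0 ≤ k) (h : b * (M - b) ^ 2 = k ^ 2) :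
    |b - (M - k * a ^ (-(1 / 2) : ℝ))| ≤ k / 2 * (M - a) * a ^ (-(3 / 2) : ℝ) := by
  have hb₀ : 0 < b := ha.trans_le hb.1
  have hdiff : b - (M - k * a ^ (-(1 / 2) : ℝ)) =
      k * (a ^ (-(1 / 2) : ℝ) - b ^ (-(1 / 2) : ℝ)) := by
    linear_combination -sub_eq_mul_rpow_of_mul_sub_sq_eq hb₀ hb.2 hk h
  have hanti : b ^ (-(1 / 2) : ℝ) ≤ a ^ (-(1 / 2) : ℝ) :=
    Real.rpow_le_rpow_of_nonpos ha hb.1 (by norm_num)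
  have htangent : a ^ (-(1 / 2) : ℝ) - b ^ (-(1 / 2) : ℝ) ≤
      1 / 2 * a ^ (-(3 / 2) : ℝ) * (b - a) := by
    have := rpow_add_mul_sub_le_rpow_of_nonpos ha hb₀ (p := -(1 / 2)) (by norm_num)
    rw [show (-(1 / 2) - 1 : ℝ) = -(3 / 2) by norm_num] at this
    linarith
  rw [hdiff, abs_of_nonneg (mul_nonneg hk (sub_nonneg.2 hanti))]
  calc k * (a ^ (-(1 / 2) : ℝ) - b ^ (-(1 / 2) : ℝ))
      ≤ k * (1 / 2 * a ^ (-(3 / 2) : ℝ) * (M - a)) := by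
        gcongr
        exact htangent.trans (by gcongr; exact hb.2)
    _ = k / 2 * (M - a) * a ^ (-(3 / 2) : ℝ) := by ring

theorem four_mul_sq_mul_lt_of_add_le {α t x : ℝ} (hα : 0 ≤ α) (ht : 0 < t)
    (hx : 2 * α + t ≤ 8 * x) : 4 * α ^ 2 * t < 4 * x * (2 * α + t) ^ 2 :=
  calc 4 * α ^ 2 * t < (2 * α + t) / 2 * (2 * α + t) ^ 2 := by
        have : 0 < 4 * α ^ 3 + 2 * α ^ 2 * t + 3 * α * t ^ 2 + t ^ 3 / 2 := by positivity
        linear_combination this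
    _ ≤ 4 * x * (2 * α + t) ^ 2 := by
        gcongr
        linarith

theorem sq_mul_rpow {c x : ℝ} (hc : 0 ≤ c) (hx : 0 ≤ x) (p : ℝ) :
    (c ^ 2 * x) ^ p = c ^ (2 * p) * x ^ p := by
  rw [Real.mul_rpow (sq_nonneg c) hx, Real.rpow_mul hc, Real.rpow_two]

theorem coulomb_fluid_endpoint_asymptotics_general {α t x : ℝ} (hα : 0 < α) (ht : 0 < t)
    (hx : 2 * α + t ≤ 8 * x) :
    (∃! b : ℝ, b ∈ Ioo (4 * x) (4 * x + 2 * α + t) ∧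
      b * (b - 2 * (2 * x + α) - t) ^ 2 = 4 * α ^ 2 * t) ∧
    ∀ b : ℝ,
      (b ∈ Ioo (4 * x) (4 * x + 2 * α + t) ∧
        b * (b - 2 * (2 * x + α) - t) ^ 2 = 4 * α ^ 2 * t) →
      |b - (4 * x + 2 * α + t - α * √t * x ^ (-(1 / 2) : ℝ))| ≤
        α * √t * (2 * α + t) / 8 * x ^ (-(3 / 2) : ℝ) := by
  have hx₀ : 0 < x := by linarith
  have cubic_eq (b : ℝ) :
      b * (b - 2 * (2 * x + α) - t) ^ 2 = b * (4 * x + 2 * α + t - b) ^ 2 := by ring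
  simp only [cubic_eq]
  constructor
  · refine existsUnique_mul_sub_sq_eq ⟨by linarith, by linarith⟩ ⟨by positivity, ?_⟩
    rw [show 4 * x + 2 * α + t - 4 * x = 2 * α + t by ring]
    exact four_mul_sq_mul_lt_of_add_le hα.le ht hx
  · rintro b ⟨hb, hbc⟩
    have hk : 4 * α ^ 2 * t = (2 * α * √t) ^ 2 := by
      rw [mul_pow, Real.sq_sqrt ht.le]
      ring
    have bound := abs_sub_sub_mul_rpow_le_of_mul_sub_sq_eq (by positivity) (Ioo_subset_Icc_self hb)
      (by positivity) (hbc.trans hk)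
    have four_mul_rpow (p : ℝ) : (4 * x) ^ p = 2 ^ (2 * p) * x ^ p := by
      rw [← sq_mul_rpow zero_le_two hx₀.le]
      norm_num
    have two_rpow_neg_one : (2 : ℝ) ^ (2 * -(1 / 2) : ℝ) = 1 / 2 := by
      norm_num [Real.rpow_neg_one]
    have two_rpow_neg_three : (2 : ℝ) ^ (2 * -(3 / 2) : ℝ) = 1 / 8 := by
      norm_num [Real.rpow_neg]
    rw [four_mul_rpow, four_mul_rpow, two_rpow_neg_one, two_rpow_neg_three] at bound
    convert bound using 1
    · congr 1
      ring
    · ring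

theorem coulomb_fluid_endpoint_asymptotics (α t : ℝ) (hα : 0 < α) (ht : 0 < t) :
    ∃ (N : ℕ) (C : ℝ), 0 < C ∧ ∀ n : ℕ, N ≤ n →
      (∃! b : ℝ, b ∈ Set.Ioo (4 * (n : ℝ)) (4 * (n : ℝ) + 2 * α + t) ∧
        b * (b - 2 * (2 * (n : ℝ) + α) - t) ^ 2 = 4 * α ^ 2 * t) ∧
      ∀ b : ℝ,
        (b ∈ Set.Ioo (4 * (n : ℝ)) (4 * (n : ℝ) + 2 * α + t) ∧
          b * (b - 2 * (2 * (n : ℝ) + α) - t) ^ 2 = 4 * α ^ 2 * t) →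
        |b - (4 * (n : ℝ) + 2 * α + t - α * Real.sqrt t * (n : ℝ) ^ (-(1 / 2) : ℝ))| ≤
          C * (n : ℝ) ^ (-(3 / 2) : ℝ) := by
  refine ⟨⌈(2 * α + t) / 8⌉₊, α * √t * (2 * α + t) / 8, by positivity, fun n hn ↦ ?_⟩
  exact coulomb_fluid_endpoint_asymptotics_general hα ht (by linarith [Nat.ceil_le.1 hn])
end
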